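/- Let (X,μ) and (Y,ν) be standard Borel spaces equipped with σ-finite Borel measures, and let σ be an Arveson measure on Y × X. Let E ⊆ Y × X be a set whose complement coincides, up to a marginally null set, with a countable union of measurable rectangles β_i × α_i (β_i ⊆ Y, α_i ⊆ X measurable). If σ(β × α) = 0 for every measurable rectangle β × α contained in the complement of E, then |σ|(Eᶜ) = 0; in particular σ(F) = 0 for every measurable set F ⊆ Eᶜ. -/

import Mathlib

/-!
Deleting the null sets `Y₀` and `X₀` from the sides of each rectangle `β i ×ˢ α i` gives
rectangles `R i ⊆ Eᶜ`, and the marginal bounds make `(Y₀ ×ˢ univ) ∪ (univ ×ˢ X₀)` a `τ`-null set,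
so `Eᶜ` is covered by the `R i` up to a `τ`-null set. The complex measure `w τ` vanishes on every
subrectangle of `R i`; rectangles form a π-system generating the product σ-algebra, so it vanishes
on every measurable subset of `R i`, and hence `w = 0` almost everywhere on `R i`. Since
`‖w‖ = 1` almost everywhere, `τ (R i) = 0`.
-/

open MeasureTheory

/-- A subset of `Y × X` is marginally null if it is contained in
`(Y₀ × X) ∪ (Y × X₀)` with `ν Y₀ = 0` and `μ X₀ = 0`. -/
def MarginallyNullYX {X Y : Type*} [MeasurableSpace X] [MeasurableSpace Y]
    (μ : Measure X) (ν : Measure Y) (M : Set (Y × X)) : Prop :=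
  ∃ (Y₀ : Set Y) (X₀ : Set X), MeasurableSet Y₀ ∧ MeasurableSet X₀ ∧
    ν Y₀ = 0 ∧ μ X₀ = 0 ∧ M ⊆ (Y₀ ×ˢ (Set.univ : Set X)) ∪ ((Set.univ : Set Y) ×ˢ X₀)

/-- Rectangles determine an integrable density: by the π-λ theorem the integral of `w` vanishes
on every measurable set, not only on rectangles. -/
lemma ae_eq_zero_of_rect {X Y : Type*} [MeasurableSpace X] [MeasurableSpace Y]
    (ρ : Measure (Y × X)) (w : Y × X → ℂ) (hw : Integrable w ρ)
    (h : ∀ (B : Set Y) (A : Set X), MeasurableSet B → MeasurableSet A →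
      ∫ p in B ×ˢ A, w p ∂ρ = 0) : w =ᵐ[ρ] 0 := by
  have huniv : ∫ p, w p ∂ρ = 0 := by
    simpa using h Set.univ Set.univ MeasurableSet.univ MeasurableSet.univ
  have key : ∀ S : Set (Y × X), MeasurableSet S → ∫ p in S, w p ∂ρ = 0 := by
    intro S hS
    induction S, hS using MeasurableSpace.induction_on_inter generateFrom_prod.symm
      isPiSystem_prod with
    | empty => simp
    | basic t ht =>
      obtain ⟨B, hB, A, hA, rfl⟩ := ht
      exact h B A hB hA
    | compl t ht ih => rw [setIntegral_compl ht hw, huniv, ih, sub_zero]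
    | iUnion f hd hf ih =>
      rw [integral_iUnion hf hd hw.integrableOn]
      simp [ih]
  exact hw.ae_eq_zero_of_forall_setIntegral_eq_zero fun S hS _ => key S hS

/-- Let `σ` be an Arveson measure on `Y × X` (encoded by its total
variation `τ` and a unimodular polar density `w`, so that `σ(R) = ∫_R w dτ` and
`|σ| = τ`), and let `E ⊆ Y × X` be a set whose complement coincides, up to a marginally
null set, with a countable union of measurable rectangles.  If `σ(β × α) = 0` for every
measurable rectangle `β × α ⊆ Eᶜ`, then `|σ|(Eᶜ) = 0`; in particular `σ(F) = 0` for
every measurable `F ⊆ Eᶜ`. -/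
theorem stmt_2
    {X Y : Type*} [MeasurableSpace X] [StandardBorelSpace X]
    [MeasurableSpace Y] [StandardBorelSpace Y]
    (μ : Measure X) (ν : Measure Y) [SigmaFinite μ] [SigmaFinite ν]
    (τ : Measure (Y × X)) [IsFiniteMeasure τ]
    (w : Y × X → ℂ) (hw_meas : Measurable w)
    (hw_unimodular : ∀ᵐ p ∂τ, ‖w p‖ = 1)
    (c : ℝ) (hc : 0 < c)
    (hmargX : ∀ α : Set X, MeasurableSet α → τ (Set.univ ×ˢ α) ≤ ENNReal.ofReal c * μ α)
    (hmargY : ∀ β : Set Y, MeasurableSet β → τ (β ×ˢ Set.univ) ≤ ENNReal.ofReal c * ν β)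
    (E : Set (Y × X))
    (hcover : ∃ (β : ℕ → Set Y) (α : ℕ → Set X),
        (∀ i, MeasurableSet (β i)) ∧ (∀ i, MeasurableSet (α i)) ∧
        MarginallyNullYX μ ν (symmDiff Eᶜ (⋃ i, β i ×ˢ α i)))
    (hrect : ∀ (β : Set Y) (α : Set X), MeasurableSet β → MeasurableSet α →
        β ×ˢ α ⊆ Eᶜ → ∫ p in β ×ˢ α, w p ∂τ = 0) :
    τ Eᶜ = 0 ∧ ∀ F : Set (Y × X), MeasurableSet F → F ⊆ Eᶜ → ∫ p in F, w p ∂τ = 0 := by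
  obtain ⟨β, α, hβ, hα, Y₀, X₀, hY₀, hX₀, hνY, hμX, hsub⟩ := hcover
  have hw_int : Integrable w τ :=
    Integrable.of_bound hw_meas.aestronglyMeasurable 1 (hw_unimodular.mono fun p hp => hp.le)
  have hN : τ ((Y₀ ×ˢ (Set.univ : Set X)) ∪ ((Set.univ : Set Y) ×ˢ X₀)) = 0 := by
    refine measure_union_null ?_ ?_
    · simpa [hνY] using hmargY Y₀ hY₀
    · simpa [hμX] using hmargX X₀ hX₀
  have hRnull : ∀ i, τ ((β i \ Y₀) ×ˢ (α i \ X₀)) = 0 := by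
    intro i
    have hRm : MeasurableSet ((β i \ Y₀) ×ˢ (α i \ X₀)) :=
      ((hβ i).diff hY₀).prod ((hα i).diff hX₀)
    have hRE : (β i \ Y₀) ×ˢ (α i \ X₀) ⊆ Eᶜ := by
      rintro p ⟨⟨hp1, hp2⟩, hp3, hp4⟩
      by_contra hpE
      rcases hsub (Or.inr ⟨Set.mem_iUnion.2 ⟨i, hp1, hp3⟩, hpE⟩) with h | h
      · exact hp2 h.1
      · exact hp4 h.2
    have hz := ae_eq_zero_of_rect (τ.restrict ((β i \ Y₀) ×ˢ (α i \ X₀))) w hw_int.restrict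
      (fun B A hB hA => by
        rw [Measure.restrict_restrict (hB.prod hA), Set.prod_inter_prod]
        refine hrect _ _ (hB.inter ((hβ i).diff hY₀)) (hA.inter ((hα i).diff hX₀)) ?_
        exact (Set.prod_mono Set.inter_subset_right Set.inter_subset_right).trans hRE)
    -- `w = 0` and `‖w‖ = 1` both hold almost everywhere on the rectangle, so it must be null.
    rw [← Measure.restrict_eq_zero, ← ae_eq_bot, ← Filter.eventually_false_iff_eq_bot]
    filter_upwards [hz, ae_restrict_of_ae hw_unimodular] with p h0 h1
    simp [h0] at h1
  have hE : τ Eᶜ = 0 := by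
    refine measure_mono_null ?_ (measure_union_null hN (measure_iUnion_null hRnull))
    intro p hp
    by_cases hpN : p ∈ (Y₀ ×ˢ (Set.univ : Set X)) ∪ ((Set.univ : Set Y) ×ˢ X₀)
    · exact Or.inl hpN
    · right
      have hpU : p ∈ ⋃ i, β i ×ˢ α i := by
        by_contra hpU
        exact hpN (hsub (Or.inl ⟨hp, hpU⟩))
      obtain ⟨i, hi⟩ := Set.mem_iUnion.1 hpU
      exact Set.mem_iUnion.2 ⟨i, ⟨hi.1, fun h => hpN (Or.inl ⟨h, trivial⟩)⟩,
        hi.2, fun h => hpN (Or.inr ⟨trivial, h⟩)⟩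
  exact ⟨hE, fun F _ hF => setIntegral_measure_zero _ (measure_mono_null hF hE)⟩
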